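/- arXiv:1705.02455 — 4 statements merged into one kernel-verified Lean document; each statement's English description precedes it below -/
import Mathlib

section
/- Let k be a positive integer, let A ∈ ℂ^{N_A×N_1} and B ∈ ℂ^{N_B×N_2} each satisfy the 2k-restricted isometry property with constant δ ∈ [0,1). Then for every matrix Φ ∈ ℂ^{N_1×N_2} having at most 2k nonzero rows and at most 2k nonzero columns, one has (1−δ)²·‖Φ‖_F² ≤ ‖A Φ B^H‖_F² ≤ (1+δ)²·‖Φ‖_F², where B^H denotes the conjugate transpose of B. -/
/-!
The Frobenius norm is computed column by column, and every column of `X` is supported on the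
nonzero rows of `X`; hence an RIP matrix `M` acts as a near-isometry on `X ↦ M * X` for
row-sparse `X` (`RIP.frobenius`). The theorem applies this twice: to `A` acting on `Φ`, and to
`B` acting on `(A * Φ)ᴴ`. The latter is row-sparse because left multiplication by `A` creates no
new nonzero columns, and `(A * Φ * Bᴴ)ᴴ = B * (A * Φ)ᴴ` has the same Frobenius norm as
`A * Φ * Bᴴ`.
-/

open Matrix

/-- `M` satisfies the `s`-restricted isometry property with constant `δ`. -/
def RIP {m n : ℕ} (M : Matrix (Fin m) (Fin n) ℂ) (s : ℕ) (δ : ℝ) : Prop :=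
  ∀ x : Fin n → ℂ, {i | x i ≠ 0}.ncard ≤ s →
    (1 - δ) * (∑ i, ‖x i‖ ^ 2) ≤ ∑ i, ‖M.mulVec x i‖ ^ 2 ∧
      ∑ i, ‖M.mulVec x i‖ ^ 2 ≤ (1 + δ) * (∑ i, ‖x i‖ ^ 2)

/-- The restricted isometry bounds, summed over the columns of a row-sparse matrix. -/
theorem RIP.frobenius {m n p s : ℕ} {M : Matrix (Fin m) (Fin n) ℂ} {δ : ℝ} (hM : RIP M s δ)
    (X : Matrix (Fin n) (Fin p) ℂ) (hX : {i | ∃ j, X i j ≠ 0}.ncard ≤ s) :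
    (1 - δ) * (∑ i, ∑ j, ‖X i j‖ ^ 2) ≤ ∑ i, ∑ j, ‖(M * X) i j‖ ^ 2 ∧
      ∑ i, ∑ j, ‖(M * X) i j‖ ^ 2 ≤ (1 + δ) * (∑ i, ∑ j, ‖X i j‖ ^ 2) := by
  have hsub (j : Fin p) : {i | X i j ≠ 0} ⊆ {i | ∃ j, X i j ≠ 0} := fun i hi => ⟨j, hi⟩
  have hcol (j : Fin p) := hM (fun i => X i j)
    ((Set.ncard_le_ncard (hsub j) (Set.toFinite _)).trans hX)
  rw [Finset.sum_comm, Finset.sum_comm (f := fun i j => ‖(M * X) i j‖ ^ 2),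
    Finset.mul_sum, Finset.mul_sum]
  exact ⟨Finset.sum_le_sum fun j _ => (hcol j).1, Finset.sum_le_sum fun j _ => (hcol j).2⟩

theorem sum_norm_sq_conjTranspose {m n : ℕ} (X : Matrix (Fin m) (Fin n) ℂ) :
    ∑ i, ∑ j, ‖Xᴴ i j‖ ^ 2 = ∑ i, ∑ j, ‖X i j‖ ^ 2 := by
  rw [Finset.sum_comm]
  simp

theorem stmt1 (k N_A N_B N1 N2 : ℕ) (hk : 0 < k)
    (A : Matrix (Fin N_A) (Fin N1) ℂ) (B : Matrix (Fin N_B) (Fin N2) ℂ)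
    (δ : ℝ) (hδ0 : 0 ≤ δ) (hδ1 : δ < 1)
    (hA : RIP A (2 * k) δ) (hB : RIP B (2 * k) δ)
    (Φ : Matrix (Fin N1) (Fin N2) ℂ)
    (hrows : {i | ∃ j, Φ i j ≠ 0}.ncard ≤ 2 * k)
    (hcols : {j | ∃ i, Φ i j ≠ 0}.ncard ≤ 2 * k) :
    (1 - δ) ^ 2 * (∑ i, ∑ j, ‖Φ i j‖ ^ 2) ≤ ∑ i, ∑ j, ‖(A * Φ * Bᴴ) i j‖ ^ 2 ∧
      ∑ i, ∑ j, ‖(A * Φ * Bᴴ) i j‖ ^ 2 ≤ (1 + δ) ^ 2 * (∑ i, ∑ j, ‖Φ i j‖ ^ 2) := by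
  have hsub : {j | ∃ i, (A * Φ)ᴴ j i ≠ 0} ⊆ {j | ∃ i, Φ i j ≠ 0} := by
    rintro j ⟨i, hi⟩
    by_contra! hj
    simp only [Set.mem_ofPred_eq, not_exists, not_not] at hj
    exact hi (by simp [Matrix.mul_apply, hj])
  obtain ⟨hA₁, hA₂⟩ := hA.frobenius Φ hrows
  obtain ⟨hB₁, hB₂⟩ := hB.frobenius (A * Φ)ᴴ
    ((Set.ncard_le_ncard hsub (Set.toFinite _)).trans hcols)
  have hadj : B * (A * Φ)ᴴ = (A * Φ * Bᴴ)ᴴ := by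
    rw [conjTranspose_mul (A * Φ), conjTranspose_conjTranspose]
  rw [hadj, sum_norm_sq_conjTranspose, sum_norm_sq_conjTranspose] at hB₁ hB₂
  constructor
  · refine le_trans ?_ hB₁
    rw [pow_two, mul_assoc]
    exact mul_le_mul_of_nonneg_left hA₁ (by linarith)
  · refine hB₂.trans ?_
    rw [pow_two, mul_assoc]
    exact mul_le_mul_of_nonneg_left hA₂ (by linarith)
end

section
/- Let k and N be positive integers and let E₀, E₁, …, E_N ∈ ℂ^{N_1×N_2} be matrices with pairwise disjoint supports such that: (i) E₀ has at most k² nonzero entries, (ii) each E_i for 1 ≤ i ≤ N has at most k² nonzero entries, (iii) ‖E_i‖₁ ≥ k²·‖E_{i+1}‖_∞ for 1 ≤ i ≤ N−1, and (iv) ‖Σ_{i=1}^N E_i‖₁ ≤ ‖E₀‖₁. Then Σ_{i=2}^N ‖E_i‖_F ≤ ‖E₀‖_F ≤ ‖E₀ + E₁‖_F. -/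
/-!
A matrix with at most `k²` nonzero entries satisfies `‖M‖_F ≤ k ‖M‖_∞` (bound every
nonzero entry by the maximum) and `‖M‖₁ ≤ k ‖M‖_F` (Cauchy–Schwarz on the support). Hence
`k ‖E_{i+1}‖_F ≤ k² ‖E_{i+1}‖_∞ ≤ ‖E_i‖₁`, and summing over `1 ≤ i ≤ N - 1` gives
`k ∑_{i ≥ 2} ‖E_i‖_F ≤ ∑_{i ≥ 1} ‖E_i‖₁ = ‖∑_{i ≥ 1} E_i‖₁ ≤ ‖E₀‖₁ ≤ k ‖E₀‖_F`,
where the equality is the additivity of the `ℓ1` norm over disjoint supports. Dividing by `k` gives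
the first inequality. The second one holds because `E₀ + E₁` agrees with `E₀` on the support
of `E₀`.
-/

open Matrix

/-- Entrywise ℓ1 norm of a matrix. -/
noncomputable def l1norm {m n : ℕ} (M : Matrix (Fin m) (Fin n) ℂ) : ℝ :=
  ∑ i, ∑ j, ‖M i j‖

/-- Frobenius norm of a matrix. -/
noncomputable def frob {m n : ℕ} (M : Matrix (Fin m) (Fin n) ℂ) : ℝ :=
  Real.sqrt (∑ i, ∑ j, ‖M i j‖ ^ 2)

/-- Entrywise ℓ∞ norm of a matrix: the maximum of the moduli of its entries. -/
noncomputable def linf {m n : ℕ} (M : Matrix (Fin m) (Fin n) ℂ) : ℝ :=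
  ⨆ p : Fin m × Fin n, ‖M p.1 p.2‖

/-- Support of a matrix: the set of index pairs of its nonzero entries. -/
def supp {m n : ℕ} (M : Matrix (Fin m) (Fin n) ℂ) : Set (Fin m × Fin n) :=
  {p | M p.1 p.2 ≠ 0}

section helpers

variable {m n : ℕ}

lemma l1norm_eq_sum_prod (M : Matrix (Fin m) (Fin n) ℂ) :
    l1norm M = ∑ p : Fin m × Fin n, ‖M p.1 p.2‖ := by
  rw [l1norm, Fintype.sum_prod_type]

lemma frob_eq_sqrt_sum_prod (M : Matrix (Fin m) (Fin n) ℂ) :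
    frob M = Real.sqrt (∑ p : Fin m × Fin n, ‖M p.1 p.2‖ ^ 2) := by
  rw [frob, Fintype.sum_prod_type]

lemma l1norm_nonneg (M : Matrix (Fin m) (Fin n) ℂ) : 0 ≤ l1norm M := by
  rw [l1norm]; positivity

lemma norm_le_linf (M : Matrix (Fin m) (Fin n) ℂ) (p : Fin m × Fin n) :
    ‖M p.1 p.2‖ ≤ linf M :=
  le_ciSup (f := fun p : Fin m × Fin n => ‖M p.1 p.2‖) (Set.finite_range _).bddAbove p

lemma linf_nonneg (M : Matrix (Fin m) (Fin n) ℂ) : 0 ≤ linf M :=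
  Real.iSup_nonneg fun _ => norm_nonneg _

lemma exists_finset_supp (M : Matrix (Fin m) (Fin n) ℂ) {k : ℕ}
    (h : (supp M).ncard ≤ k ^ 2) :
    ∃ S : Finset (Fin m × Fin n), (S.card : ℝ) ≤ (k : ℝ) ^ 2 ∧ ∀ p, p ∉ S → M p.1 p.2 = 0 := by
  classical
  refine ⟨(Set.toFinite (supp M)).toFinset, ?_, fun p hp => ?_⟩
  · rw [← Set.ncard_eq_toFinset_card]
    exact_mod_cast h
  · simpa [supp] using hp

lemma frob_le_mul_linf (M : Matrix (Fin m) (Fin n) ℂ) {k : ℕ}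
    (h : (supp M).ncard ≤ k ^ 2) : frob M ≤ k * linf M := by
  obtain ⟨S, hS, hz⟩ := exists_finset_supp M h
  have hl := linf_nonneg M
  rw [frob_eq_sqrt_sum_prod]
  refine Real.sqrt_le_iff.2 ⟨by positivity, ?_⟩
  rw [← Finset.sum_subset (Finset.subset_univ S) (fun p _ hp => by simp [hz p hp])]
  calc ∑ p ∈ S, ‖M p.1 p.2‖ ^ 2 ≤ ∑ _p ∈ S, linf M ^ 2 :=
        Finset.sum_le_sum fun p _ => pow_le_pow_left₀ (norm_nonneg _) (norm_le_linf M p) 2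
    _ = S.card * linf M ^ 2 := by simp
    _ ≤ (k : ℝ) ^ 2 * linf M ^ 2 := by gcongr
    _ = (k * linf M) ^ 2 := by ring

lemma l1norm_le_mul_frob (M : Matrix (Fin m) (Fin n) ℂ) {k : ℕ}
    (h : (supp M).ncard ≤ k ^ 2) : l1norm M ≤ k * frob M := by
  obtain ⟨S, hS, hz⟩ := exists_finset_supp M h
  have hf : 0 ≤ frob M := Real.sqrt_nonneg _
  refine (pow_le_pow_iff_left₀ (l1norm_nonneg M) (by positivity) two_ne_zero).1 ?_
  rw [mul_pow, frob_eq_sqrt_sum_prod, Real.sq_sqrt (by positivity), l1norm_eq_sum_prod,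
    ← Finset.sum_subset (Finset.subset_univ S) (fun p _ hp => by simp [hz p hp]),
    ← Finset.sum_subset (Finset.subset_univ S) (fun p _ hp => by simp [hz p hp])]
  exact sq_sum_le_card_mul_sum_sq.trans (by gcongr)

lemma eq_zero_of_disjoint_supp {A B : Matrix (Fin m) (Fin n) ℂ}
    (h : Disjoint (supp A) (supp B)) {p : Fin m × Fin n} (hA : A p.1 p.2 ≠ 0) :
    B p.1 p.2 = 0 := by
  by_contra hB
  exact Set.disjoint_left.1 h (show p ∈ supp A from hA) hB

lemma l1norm_sum_of_disjoint (s : Finset ℕ) (E : ℕ → Matrix (Fin m) (Fin n) ℂ)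
    (h : ∀ i ∈ s, ∀ j ∈ s, i ≠ j → Disjoint (supp (E i)) (supp (E j))) :
    l1norm (∑ i ∈ s, E i) = ∑ i ∈ s, l1norm (E i) := by
  simp only [l1norm_eq_sum_prod]
  rw [Finset.sum_comm]
  refine Finset.sum_congr rfl fun p _ => ?_
  rw [Matrix.sum_apply]
  by_cases hp : ∃ i ∈ s, E i p.1 p.2 ≠ 0
  · obtain ⟨i, his, hip⟩ := hp
    have hz : ∀ j ∈ s, j ≠ i → E j p.1 p.2 = 0 := fun j hj hji =>
      eq_zero_of_disjoint_supp (h i his j hj hji.symm) hip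
    rw [Finset.sum_eq_single_of_mem i his hz,
      Finset.sum_eq_single_of_mem i his fun j hj hji => by rw [hz j hj hji, norm_zero]]
  · push Not at hp
    rw [Finset.sum_eq_zero hp, Finset.sum_eq_zero fun i his => by rw [hp i his, norm_zero],
      norm_zero]

lemma frob_le_frob_add_of_disjoint {A B : Matrix (Fin m) (Fin n) ℂ}
    (h : Disjoint (supp A) (supp B)) : frob A ≤ frob (A + B) := by
  simp only [frob_eq_sqrt_sum_prod]
  refine Real.sqrt_le_sqrt (Finset.sum_le_sum fun p _ => ?_)
  by_cases hA : A p.1 p.2 = 0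
  · rw [hA, norm_zero, zero_pow two_ne_zero]
    positivity
  · rw [Matrix.add_apply, eq_zero_of_disjoint_supp h hA, add_zero]

end helpers

theorem stmt4 (k N N1 N2 : ℕ) (hk : 0 < k) (hN : 0 < N)
    (E : ℕ → Matrix (Fin N1) (Fin N2) ℂ)
    (hdisj : ∀ i j, i ≤ N → j ≤ N → i ≠ j → Disjoint (supp (E i)) (supp (E j)))
    (h0 : (supp (E 0)).ncard ≤ k ^ 2)
    (hi : ∀ i, 1 ≤ i → i ≤ N → (supp (E i)).ncard ≤ k ^ 2)
    (hdec : ∀ i, 1 ≤ i → i + 1 ≤ N → l1norm (E i) ≥ (k : ℝ) ^ 2 * linf (E (i + 1)))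
    (hsum : l1norm (∑ i ∈ Finset.Icc 1 N, E i) ≤ l1norm (E 0)) :
    ∑ i ∈ Finset.Icc 2 N, frob (E i) ≤ frob (E 0) ∧ frob (E 0) ≤ frob (E 0 + E 1) := by
  refine ⟨?_, frob_le_frob_add_of_disjoint (hdisj 0 1 (Nat.zero_le _) hN zero_ne_one)⟩
  have hk' : (0 : ℝ) < k := by exact_mod_cast hk
  have hstep : ∀ i ∈ Finset.Icc 2 N, (k : ℝ) * frob (E i) ≤ l1norm (E (i - 1)) := by
    intro i him
    obtain ⟨h2, hiN⟩ := Finset.mem_Icc.1 him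
    obtain ⟨j, rfl⟩ : ∃ j, i = j + 1 := ⟨i - 1, by omega⟩
    calc (k : ℝ) * frob (E (j + 1)) ≤ k * (k * linf (E (j + 1))) := by
          gcongr
          exact frob_le_mul_linf _ (hi _ (by omega) hiN)
      _ = (k : ℝ) ^ 2 * linf (E (j + 1)) := by ring
      _ ≤ l1norm (E j) := hdec j (by omega) hiN
  -- The index shift maps `{2, …, N}` injectively into `{1, …, N}`.
  have hshift : ∑ i ∈ Finset.Icc 2 N, l1norm (E (i - 1)) ≤ ∑ i ∈ Finset.Icc 1 N, l1norm (E i) := by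
    have hinj : Set.InjOn (fun i : ℕ => i - 1) (Finset.Icc 2 N : Finset ℕ) := by
      intro a ha b hb hab
      simp only [Finset.coe_Icc, Set.mem_Icc] at ha hb hab
      omega
    rw [← Finset.sum_image (f := fun i => l1norm (E i)) hinj]
    refine Finset.sum_le_sum_of_subset_of_nonneg ?_ fun i _ _ => l1norm_nonneg _
    intro j hj
    obtain ⟨i, him, rfl⟩ := Finset.mem_image.1 hj
    simp only [Finset.mem_Icc] at him ⊢
    omega
  have hadd := l1norm_sum_of_disjoint (Finset.Icc 1 N) E fun i hi' j hj' hij =>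
    hdisj i j (Finset.mem_Icc.1 hi').2 (Finset.mem_Icc.1 hj').2 hij
  refine le_of_mul_le_mul_left ?_ hk'
  calc (k : ℝ) * ∑ i ∈ Finset.Icc 2 N, frob (E i)
      = ∑ i ∈ Finset.Icc 2 N, (k : ℝ) * frob (E i) := Finset.mul_sum _ _ _
    _ ≤ ∑ i ∈ Finset.Icc 2 N, l1norm (E (i - 1)) := Finset.sum_le_sum hstep
    _ ≤ ∑ i ∈ Finset.Icc 1 N, l1norm (E i) := hshift
    _ = l1norm (∑ i ∈ Finset.Icc 1 N, E i) := hadd.symm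
    _ ≤ l1norm (E 0) := hsum
    _ ≤ k * frob (E 0) := l1norm_le_mul_frob _ h0
end

section
/- Let k be a positive integer, let A ∈ ℂ^{N_A×N_1} and B ∈ ℂ^{N_B×N_2} each satisfy the 2k-restricted isometry property with constant δ ∈ [0,1), and let P, Q ∈ ℂ^{N_1×N_2} be matrices with disjoint supports, each having at most k nonzero rows and at most k nonzero columns. Then |Re tr((A P B^H)^H (A Q B^H))| ≤ 2δ·‖P‖_F·‖Q‖_F. -/
/-!
For a matrix `X` with at most `2k` nonzero rows and columns, applying the RIP of `A` to the columns
of `X`, then the RIP of `B` to the columns of `(A X)ᴴ`, gives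
`(1 - δ)² ‖X‖² ≤ ‖A X Bᴴ‖² ≤ (1 + δ)² ‖X‖²` in the Frobenius norm (`frobSq_sandwich_bounds`).
With `p = ‖P‖` and `q = ‖Q‖`, the two matrices `q P ± p Q` are of this kind, and both have squared
norm `2 p² q²` because the supports are disjoint. By polarization, `4 p q Re tr(UᴴV)` with
`U = A P Bᴴ`, `V = A Q Bᴴ` is the difference of the squared norms of the images of `q P ± p Q`,
which is at most `((1 + δ)² - (1 - δ)²) · 2 p² q² = 8 δ p² q²` in absolute value.
-/

open Matrix

/-- Squared Frobenius norm. -/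
noncomputable def frobSq {m n : ℕ} (M : Matrix (Fin m) (Fin n) ℂ) : ℝ :=
  ∑ i, ∑ j, ‖M i j‖ ^ 2

lemma frobSq_nonneg {m n : ℕ} (M : Matrix (Fin m) (Fin n) ℂ) : 0 ≤ frobSq M := by
  unfold frobSq; positivity

lemma frobSq_conjTranspose {m n : ℕ} (M : Matrix (Fin m) (Fin n) ℂ) :
    frobSq Mᴴ = frobSq M := by
  unfold frobSq
  rw [Finset.sum_comm]
  simp [Matrix.conjTranspose_apply]

lemma frobSq_mul_bounds {m n l s : ℕ} {δ : ℝ} {M : Matrix (Fin m) (Fin n) ℂ}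
    (hM : RIP M s δ) (X : Matrix (Fin n) (Fin l) ℂ)
    (hX : {i | ∃ j, X i j ≠ 0}.ncard ≤ s) :
    (1 - δ) * frobSq X ≤ frobSq (M * X) ∧ frobSq (M * X) ≤ (1 + δ) * frobSq X := by
  have key (j : Fin l) := hM (fun i => X i j)
    ((Set.ncard_le_ncard (t := {i | ∃ j, X i j ≠ 0}) (fun i hi => ⟨j, hi⟩) (Set.toFinite _)).trans hX)
  have h1 : frobSq X = ∑ j, ∑ i, ‖X i j‖ ^ 2 := Finset.sum_comm
  have h2 : frobSq (M * X) = ∑ j, ∑ i, ‖M.mulVec (fun i => X i j) i‖ ^ 2 := Finset.sum_comm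
  rw [h1, h2, Finset.mul_sum, Finset.mul_sum]
  exact ⟨Finset.sum_le_sum fun j _ => (key j).1, Finset.sum_le_sum fun j _ => (key j).2⟩

lemma frobSq_sandwich_bounds {a b m n s : ℕ} {δ : ℝ} (hδ0 : 0 ≤ δ) (hδ1 : δ < 1)
    {A : Matrix (Fin a) (Fin m) ℂ} {B : Matrix (Fin b) (Fin n) ℂ}
    (hA : RIP A s δ) (hB : RIP B s δ) (X : Matrix (Fin m) (Fin n) ℂ)
    (hrows : {i | ∃ j, X i j ≠ 0}.ncard ≤ s) (hcols : {j | ∃ i, X i j ≠ 0}.ncard ≤ s) :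
    (1 - δ) ^ 2 * frobSq X ≤ frobSq (A * X * Bᴴ) ∧
      frobSq (A * X * Bᴴ) ≤ (1 + δ) ^ 2 * frobSq X := by
  obtain ⟨hA1, hA2⟩ := frobSq_mul_bounds hA X hrows
  have hsub : {j | ∃ i, (A * X)ᴴ j i ≠ 0} ⊆ {j | ∃ i, X i j ≠ 0} := by
    rintro j ⟨i, hi⟩
    by_contra hj
    simp only [Set.mem_ofPred_eq, not_exists, not_not] at hj
    exact hi (by simp [Matrix.conjTranspose_apply, Matrix.mul_apply, hj])
  obtain ⟨hB1, hB2⟩ := frobSq_mul_bounds hB (A * X)ᴴ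
    ((Set.ncard_le_ncard hsub (Set.toFinite _)).trans hcols)
  have hT : frobSq (B * (A * X)ᴴ) = frobSq (A * X * Bᴴ) := by
    rw [← frobSq_conjTranspose (A * X * Bᴴ), Matrix.conjTranspose_mul (A * X),
      Matrix.conjTranspose_conjTranspose]
  rw [hT, frobSq_conjTranspose] at hB1 hB2
  constructor
  · nlinarith [mul_le_mul_of_nonneg_left hA1 (sub_nonneg.2 hδ1.le)]
  · nlinarith [mul_le_mul_of_nonneg_left hA2 (by linarith : 0 ≤ 1 + δ)]

lemma frobSq_polarization {m n : ℕ} (U V : Matrix (Fin m) (Fin n) ℂ) (p q : ℝ) :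
    frobSq ((q : ℂ) • U + (p : ℂ) • V) - frobSq ((q : ℂ) • U - (p : ℂ) • V) =
      4 * (p * q) * (Matrix.trace (Uᴴ * V)).re := by
  have ht : (Matrix.trace (Uᴴ * V)).re = ∑ i, ∑ j, (star (U i j) * V i j).re := by
    rw [Finset.sum_comm]
    simp only [Matrix.trace, Matrix.diag_apply, Matrix.mul_apply, Matrix.conjTranspose_apply,
      Complex.re_sum]
  rw [ht]
  unfold frobSq
  simp only [← Finset.sum_sub_distrib, Finset.mul_sum]
  refine Finset.sum_congr rfl fun i _ => Finset.sum_congr rfl fun j _ => ?_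
  simp only [Complex.sq_norm, Complex.normSq_apply, Matrix.add_apply, Matrix.sub_apply,
    Matrix.smul_apply, smul_eq_mul, Complex.add_re, Complex.add_im, Complex.sub_re,
    Complex.sub_im, Complex.mul_re, Complex.mul_im, Complex.ofReal_re, Complex.ofReal_im,
    Complex.star_def, Complex.conj_re, Complex.conj_im]
  ring

lemma frobSq_combination_of_disjoint {m n : ℕ} {P Q : Matrix (Fin m) (Fin n) ℂ}
    (h : Disjoint (supp P) (supp Q)) (c d : ℝ) :
    frobSq ((c : ℂ) • P + (d : ℂ) • Q) = c ^ 2 * frobSq P + d ^ 2 * frobSq Q := by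
  unfold frobSq
  simp only [Finset.mul_sum, ← Finset.sum_add_distrib]
  refine Finset.sum_congr rfl fun i _ => Finset.sum_congr rfl fun j _ => ?_
  by_cases hP : P i j = 0
  · simp [hP, mul_pow]
  · have hQ : Q i j = 0 := by
      by_contra hQ
      exact Set.disjoint_left.1 h (show (i, j) ∈ supp P from hP) hQ
    simp [hQ, mul_pow]

lemma ncard_le_two_mul_of_subset_union {n k : ℕ} {S T R : Set (Fin n)} (hR : R ⊆ S ∪ T)
    (hS : S.ncard ≤ k) (hT : T.ncard ≤ k) : R.ncard ≤ 2 * k := by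
  have h1 := Set.ncard_le_ncard hR (Set.toFinite _)
  have h2 := Set.ncard_union_le S T
  omega

lemma eq_zero_of_frob_eq_zero {m n : ℕ} {M : Matrix (Fin m) (Fin n) ℂ} (h : frob M = 0) :
    M = 0 := by
  have h0 : ∑ i, ∑ j, ‖M i j‖ ^ 2 = 0 := (Real.sqrt_eq_zero (frobSq_nonneg M)).1 h
  ext i j
  rw [Finset.sum_eq_zero_iff_of_nonneg (fun _ _ => by positivity)] at h0
  have h1 := h0 i (Finset.mem_univ _)
  rw [Finset.sum_eq_zero_iff_of_nonneg (fun _ _ => by positivity)] at h1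
  simpa using h1 j (Finset.mem_univ _)

theorem stmt6 (k N_A N_B N1 N2 : ℕ) (hk : 0 < k)
    (A : Matrix (Fin N_A) (Fin N1) ℂ) (B : Matrix (Fin N_B) (Fin N2) ℂ)
    (δ : ℝ) (hδ0 : 0 ≤ δ) (hδ1 : δ < 1)
    (hA : RIP A (2 * k) δ) (hB : RIP B (2 * k) δ)
    (P Q : Matrix (Fin N1) (Fin N2) ℂ)
    (hdisj : Disjoint (supp P) (supp Q))
    (hProws : {i | ∃ j, P i j ≠ 0}.ncard ≤ k)
    (hPcols : {j | ∃ i, P i j ≠ 0}.ncard ≤ k)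
    (hQrows : {i | ∃ j, Q i j ≠ 0}.ncard ≤ k)
    (hQcols : {j | ∃ i, Q i j ≠ 0}.ncard ≤ k) :
    |(Matrix.trace ((A * P * Bᴴ)ᴴ * (A * Q * Bᴴ))).re| ≤ 2 * δ * frob P * frob Q := by
  have hp0 : 0 ≤ frob P := Real.sqrt_nonneg _
  rcases hp0.eq_or_lt with hp | hp
  · simp [eq_zero_of_frob_eq_zero hp.symm, frob]
  have hq0 : 0 ≤ frob Q := Real.sqrt_nonneg _
  rcases hq0.eq_or_lt with hq | hq
  · simp [eq_zero_of_frob_eq_zero hq.symm, frob]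
  have hP2 : frobSq P = frob P ^ 2 := (Real.sq_sqrt (frobSq_nonneg P)).symm
  have hQ2 : frobSq Q = frob Q ^ 2 := (Real.sq_sqrt (frobSq_nonneg Q)).symm
  generalize frob P = p at *
  generalize frob Q = q at *
  have bounds (c d : ℝ) := frobSq_sandwich_bounds hδ0 hδ1 hA hB ((c : ℂ) • P + (d : ℂ) • Q)
    (ncard_le_two_mul_of_subset_union (by
      rintro i ⟨j, hj⟩
      by_contra h
      simp only [Set.mem_union, Set.mem_ofPred_eq, not_or, not_exists, not_not] at h
      exact hj (by simp [h.1 j, h.2 j])) hProws hQrows)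
    (ncard_le_two_mul_of_subset_union (by
      rintro j ⟨i, hi⟩
      by_contra h
      simp only [Set.mem_union, Set.mem_ofPred_eq, not_or, not_exists, not_not] at h
      exact hi (by simp [h.1 i, h.2 i])) hPcols hQcols)
  have himage (c d : ℝ) : A * ((c : ℂ) • P + (d : ℂ) • Q) * Bᴴ =
      (c : ℂ) • (A * P * Bᴴ) + (d : ℂ) • (A * Q * Bᴴ) := by
    simp [Matrix.mul_add, Matrix.add_mul]
  obtain ⟨hl1, hu1⟩ := bounds q p
  obtain ⟨hl2, hu2⟩ := bounds q (-p)
  rw [himage, frobSq_combination_of_disjoint hdisj, hP2, hQ2] at hl1 hu1 hl2 hu2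
  have hpol := frobSq_polarization (A * P * Bᴴ) (A * Q * Bᴴ) p q
  rw [Complex.ofReal_neg, neg_smul, ← sub_eq_add_neg] at hl2 hu2
  have hpq : 0 < p * q := mul_pos hp hq
  rw [abs_le]
  constructor <;> refine le_of_mul_le_mul_left ?_ hpq <;> nlinarith
end

section
/- Let E ∈ ℂ^{N_1×N_2}, let Ω be any subset of index pairs {1,…,N_1}×{1,…,N_2}, and let k be a positive integer. Then there exist an integer N ≥ 0 and matrices E₀, E₁, …, E_N ∈ ℂ^{N_1×N_2} with pairwise disjoint supports such that: (i) E = Σ_{i=0}^N E_i, (ii) E₀ agrees with E on Ω and is zero elsewhere, (iii) for each 1 ≤ i ≤ N the support of E_i is disjoint from Ω and has at most k² elements, and (iv) (1/k²)·‖E_i‖₁ ≥ ‖E_{i+1}‖_∞ for all 1 ≤ i ≤ N−1. -/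
/-!
Enumerate the index pairs outside `Ω` in decreasing order of the modulus of the entry of `E`
(`exists_rank`), and put the pair of rank `r` into block `r / k² + 1`; the pairs of `Ω` form
block `0`. The matrix `E_i` is the restriction of `E` to block `i`. A block `i ≥ 1` has at most
`k²` elements, because ranks are injective. If block `i + 1` contains a pair `p`, then every rank
of block `i` is attained, so block `i` has exactly `k²` elements, and each of them carries an entry
of modulus at least `‖E p‖`; summing gives `k² ‖E p‖ ≤ ‖E_i‖₁`. When block `i + 1` is empty the
last inequality is trivial, so `N` may be taken as any upper bound for the block numbers.
-/

open Matrix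

/-- A ranking of a subset `S` of a finite type in decreasing order of `f`: distinct elements get
distinct ranks, the ranks used form an initial segment of `ℕ`, and `f` decreases with the rank.
The values of `r` outside `S` are irrelevant. -/
lemma exists_rank {α : Type*} [Fintype α] (S : Set α) (f : α → ℝ) :
    ∃ (m : ℕ) (r : α → ℕ), Set.InjOn r S ∧ (∀ p ∈ S, r p < m) ∧
      (∀ n < m, ∃ q ∈ S, r q = n) ∧
      (∀ p ∈ S, ∀ q ∈ S, r q ≤ r p → f p ≤ f q) := by
  classical
  let e₀ : Fin (Fintype.card S) ≃ S := (Fintype.equivFin S).symm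
  let g : Fin (Fintype.card S) → ℝ := fun t => -f (e₀ t)
  -- `Tuple.sort` sorts increasingly, hence the sign in `g`.
  let e : Fin (Fintype.card S) ≃ S := (Tuple.sort g).trans e₀
  have he : ∀ s t, s ≤ t → f (e t) ≤ f (e s) := fun s t hst => by
    have := Tuple.monotone_sort g hst
    simpa [g, e] using this
  let r : α → ℕ := fun p => if h : p ∈ S then (e.symm ⟨p, h⟩ : ℕ) else 0
  have hr : ∀ p (h : p ∈ S), r p = (e.symm ⟨p, h⟩ : ℕ) := fun p h => dif_pos h
  refine ⟨Fintype.card S, r, ?_, ?_, ?_, ?_⟩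
  · intro p hp q hq hpq
    rw [hr p hp, hr q hq] at hpq
    simpa using e.symm.injective (Fin.ext hpq)
  · intro p hp
    rw [hr p hp]
    exact Fin.is_lt _
  · intro n hn
    refine ⟨e ⟨n, hn⟩, (e ⟨n, hn⟩).2, ?_⟩
    rw [hr _ (e ⟨n, hn⟩).2]
    simp
  · intro p hp q hq hqp
    rw [hr p hp, hr q hq] at hqp
    simpa using he _ _ (Fin.le_def.mpr hqp)

theorem stmt10 (N1 N2 k : ℕ) (hk : 0 < k)
    (E : Matrix (Fin N1) (Fin N2) ℂ) (Ω : Set (Fin N1 × Fin N2)) :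
    ∃ (N : ℕ) (Es : ℕ → Matrix (Fin N1) (Fin N2) ℂ),
      (∀ i j, i ≤ N → j ≤ N → i ≠ j → Disjoint (supp (Es i)) (supp (Es j))) ∧
      E = ∑ i ∈ Finset.range (N + 1), Es i ∧
      (∀ p : Fin N1 × Fin N2,
        (p ∈ Ω → Es 0 p.1 p.2 = E p.1 p.2) ∧ (p ∉ Ω → Es 0 p.1 p.2 = 0)) ∧
      (∀ i, 1 ≤ i → i ≤ N →
        Disjoint (supp (Es i)) Ω ∧ (supp (Es i)).ncard ≤ k ^ 2) ∧
      (∀ i, 1 ≤ i → i + 1 ≤ N →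
        (1 / (k : ℝ) ^ 2) * l1norm (Es i) ≥ linf (Es (i + 1))) := by
  classical
  obtain ⟨m, r, hinj, hlt, hsurj, hmono⟩ := exists_rank Ωᶜ (fun p => ‖E p.1 p.2‖)
  have hk2 : 0 < k ^ 2 := by positivity
  let b : Fin N1 × Fin N2 → ℕ := fun p => if p ∈ Ω then 0 else r p / k ^ 2 + 1
  have hb : ∀ p i, b p = i + 1 ↔ p ∉ Ω ∧ i * k ^ 2 ≤ r p ∧ r p < (i + 1) * k ^ 2 := by
    intro p i
    by_cases hp : p ∈ Ω
    · simp [b, hp]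
    · simp only [b, hp, if_false, Nat.add_right_cancel_iff, not_false_eq_true, true_and]
      rw [← Nat.le_div_iff_mul_le hk2, ← Nat.div_lt_iff_lt_mul hk2]
      omega
  have hbm : ∀ p, b p ≤ m := by
    intro p
    by_cases hp : p ∈ Ω
    · simp [b, hp]
    · have h1 := hlt p hp
      have h2 := Nat.div_le_self (r p) (k ^ 2)
      simp only [b, hp, if_false]
      omega
  let Es : ℕ → Matrix (Fin N1) (Fin N2) ℂ := fun i => Matrix.of fun x y =>
    if b (x, y) = i then E x y else 0
  have hEs : ∀ i (p : Fin N1 × Fin N2), Es i p.1 p.2 = if b p = i then E p.1 p.2 else 0 :=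
    fun i p => rfl
  have hsupp : ∀ i p, p ∈ supp (Es i) → b p = i := by
    intro i p hp
    by_contra h
    exact hp (by rw [hEs, if_neg h])
  refine ⟨m, Es, ?_, ?_, ?_, ?_, ?_⟩
  · intro i j _ _ hij
    rw [Set.disjoint_left]
    intro p hi hj
    exact hij ((hsupp i p hi).symm.trans (hsupp j p hj))
  · ext x y
    rw [Matrix.sum_apply]
    have := hbm (x, y)
    simp only [Es, Matrix.of_apply, Finset.sum_ite_eq, Finset.mem_range]
    rw [if_pos (by omega)]
  · intro p
    refine ⟨fun hp => ?_, fun hp => ?_⟩ <;> rw [hEs] <;> simp [b, hp]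
  · rintro i hi -
    obtain ⟨i, rfl⟩ : ∃ j, i = j + 1 := ⟨i - 1, by omega⟩
    refine ⟨?_, ?_⟩
    · rw [Set.disjoint_left]
      intro p hp
      exact ((hb p i).1 (hsupp _ p hp)).1
    · have hcard : (supp (Es (i + 1))).ncard ≤
          (Finset.Ico (i * k ^ 2) ((i + 1) * k ^ 2) : Set ℕ).ncard := by
        refine Set.ncard_le_ncard_of_injOn r ?_ ?_ (Finset.finite_toSet _)
        · intro p hp
          have := (hb p i).1 (hsupp _ p hp)
          simpa using this.2
        · intro p hp q hq hpq
          exact hinj ((hb p i).1 (hsupp _ p hp)).1 ((hb q i).1 (hsupp _ q hq)).1 hpq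
      rw [Set.ncard_coe_finset, Nat.card_Ico, ← Nat.sub_mul] at hcard
      simpa using hcard
  · rintro i hi -
    obtain ⟨i, rfl⟩ : ∃ j, i = j + 1 := ⟨i - 1, by omega⟩
    have hl1 : l1norm (Es (i + 1)) =
        ∑ p ∈ Finset.univ.filter (fun p => b p = i + 1), ‖E p.1 p.2‖ := by
      rw [l1norm, ← Fintype.sum_prod_type' (fun x y => ‖Es (i + 1) x y‖), Finset.sum_filter]
      refine Finset.sum_congr rfl fun p _ => ?_
      rw [hEs]
      split_ifs <;> simp
    have hpos : 0 ≤ (1 / (k : ℝ) ^ 2) * l1norm (Es (i + 1)) := by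
      rw [hl1]
      positivity
    refine Real.iSup_le (fun p => ?_) hpos
    rw [hEs]
    split_ifs with hp
    · obtain ⟨hpΩ, hp1, -⟩ := (hb p (i + 1)).1 hp
      have hcard : (Finset.Ico (i * k ^ 2) ((i + 1) * k ^ 2)).card ≤
          (Finset.univ.filter (fun p => b p = i + 1)).card := by
        refine Finset.card_le_card_of_surjOn r ?_
        intro n hn
        rw [Finset.coe_Ico, Set.mem_Ico] at hn
        -- Ranks below that of `p` are attained, so block `i + 1` is full.
        obtain ⟨q, hq, rfl⟩ := hsurj n (by have := hlt p hpΩ; omega)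
        exact ⟨q, by simpa using (hb q i).2 ⟨hq, hn⟩, rfl⟩
      rw [Nat.card_Ico, ← Nat.sub_mul, Nat.add_sub_cancel_left, one_mul] at hcard
      have hsum := Finset.card_nsmul_le_sum (Finset.univ.filter (fun p => b p = i + 1))
        (fun p => ‖E p.1 p.2‖) ‖E p.1 p.2‖ (by
          intro q hq
          obtain ⟨hqΩ, -, hq2⟩ := (hb q i).1 (Finset.mem_filter.1 hq).2
          exact hmono p hpΩ q hqΩ (by omega))
      rw [← hl1, nsmul_eq_mul] at hsum
      have hcard' : (k : ℝ) ^ 2 ≤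
          ((Finset.univ.filter (fun p => b p = i + 1)).card : ℝ) := by exact_mod_cast hcard
      have hkR : (0 : ℝ) < (k : ℝ) ^ 2 := by exact_mod_cast hk2
      rw [one_div, inv_mul_eq_div, le_div_iff₀ hkR, mul_comm]
      exact (mul_le_mul_of_nonneg_right hcard' (norm_nonneg _)).trans hsum
    · simpa using hpos
end
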